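/- Let N(n,n) denote the number of perfect matchings of the n-by-n grid graph, for n even. Then as n → ∞ along even integers, (1/n²) · log N(n,n) converges to G/π, where G = ∑_{k=0}^{∞} (−1)^k/(2k+1)² is Catalan's constant; in other words, the number of domino tilings of the n-by-n board grows like e^{(G/π) n²} ≈ 1.34^{n²}. -/

import Mathlib

open Real Filter

/-- The m-by-n grid graph on vertex set `Fin m × Fin n`: two vertices are
adjacent iff they differ by exactly 1 in one coordinate and agree in the other. -/
def gridGraph (m n : ℕ) : SimpleGraph (Fin m × Fin n) :=
  SimpleGraph.fromRel (fun p q =>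
    (p.1 = q.1 ∧ p.2.val + 1 = q.2.val) ∨ (p.2 = q.2 ∧ p.1.val + 1 = q.1.val))

/-- The number of perfect matchings of a graph. -/
noncomputable def numPerfectMatchings {V : Type*} (G : SimpleGraph V) : ℕ :=
  {M : G.Subgraph | M.IsPerfectMatching}.ncard

/-- Catalan's constant G = ∑_{k=0}^∞ (-1)^k / (2k+1)². -/
noncomputable def catalanConstant : ℝ := ∑' k : ℕ, (-1 : ℝ) ^ k / (2 * k + 1) ^ 2

namespace CatalanAux

open MeasureTheory

lemma integral_arctan_div : ∫ t in (0:ℝ)..1, arctan t / t = catalanConstant := by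
  have hF : ∀ k : ℕ, ∀ t : ℝ, ‖(-1 : ℝ) ^ k * t ^ (2 * k) / (2 * k + 1)‖ = t ^ (2 * k) / (2 * k + 1) := by
    intro k t
    rw [norm_div, norm_mul, norm_pow, norm_neg, norm_one, one_pow, one_mul, norm_pow,
      pow_mul, pow_mul, Real.norm_eq_abs, sq_abs, Real.norm_of_nonneg]
    positivity
  have hint : ∀ k : ℕ, ∫ t in (0:ℝ)..1, t ^ (2 * k) / (2 * (k:ℝ) + 1) = 1 / (2 * (k:ℝ) + 1) ^ 2 := by
    intro k
    rw [intervalIntegral.integral_div, integral_pow]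
    push_cast
    simp
    field_simp
  have hint' : ∀ k : ℕ, ∫ t in (0:ℝ)..1, (-1 : ℝ) ^ k * t ^ (2 * k) / (2 * (k:ℝ) + 1)
      = (-1) ^ k / (2 * (k:ℝ) + 1) ^ 2 := by
    intro k
    simp_rw [mul_div_assoc]
    rw [intervalIntegral.integral_const_mul, hint]
    ring
  have hsum : Summable (fun k : ℕ => 1 / (2 * (k:ℝ) + 1) ^ 2) := by
    have h1 : Summable (fun k : ℕ => 1 / ((k:ℝ)) ^ 2) := Real.summable_one_div_nat_pow.2 (by norm_num)
    have h2 := h1.comp_injective (i := fun k : ℕ => 2 * k + 1) (fun a b h => by simpa using h)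
    refine h2.congr fun k => ?_
    simp
  have key := hasSum_integral_of_summable_integral_norm
    (μ := volume.restrict (Set.Ioc (0:ℝ) 1))
    (F := fun (k : ℕ) (t : ℝ) => (-1 : ℝ) ^ k * t ^ (2 * k) / (2 * (k:ℝ) + 1)) ?_ ?_
  · have e1 : ∀ k : ℕ, ∫ t in Set.Ioc (0:ℝ) 1, (-1 : ℝ) ^ k * t ^ (2 * k) / (2 * (k:ℝ) + 1)
      = (-1) ^ k / (2 * (k:ℝ) + 1) ^ 2 := by
      intro k
      rw [← intervalIntegral.integral_of_le zero_le_one, hint']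
    simp_rw [e1] at key
    rw [catalanConstant, key.tsum_eq, intervalIntegral.integral_of_le zero_le_one]
    rw [integral_Ioc_eq_integral_Ioo, integral_Ioc_eq_integral_Ioo]
    refine setIntegral_congr_fun measurableSet_Ioo fun t ht => ?_
    change arctan t / t = _
    have ha := Real.hasSum_arctan (x := t) (by rw [Real.norm_of_nonneg ht.1.le]; exact ht.2)
    have hb := ha.div_const t
    rw [← hb.tsum_eq]
    refine tsum_congr fun k => ?_
    have : t ≠ 0 := ht.1.ne'
    push_cast
    field_simp
    ring
  · intro k
    exact (Continuous.integrableOn_Ioc (by fun_prop))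
  · simp_rw [hF]
    refine hsum.congr fun k => ?_
    rw [← intervalIntegral.integral_of_le zero_le_one, hint]

lemma inner_integral (t : ℝ) (ht : 0 < t) :
    ∫ x in (0:ℝ)..(π / 2), cos x / √(1 + (t * cos x) ^ 2) = arctan t / t := by
  have hd : ∀ x ∈ Set.uIcc 0 (π / 2), HasDerivAt (fun x => arcsin (t * sin x / √(1 + t ^ 2)) / t)
      (cos x / √(1 + (t * cos x) ^ 2)) x := by
    intro x _
    have hs : 0 < √(1 + t ^ 2) := by positivity
    have hs2 : √(1 + t ^ 2) ^ 2 = 1 + t ^ 2 := sq_sqrt (by positivity)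
    have hlt : |t * sin x / √(1 + t ^ 2)| < 1 := by
      rw [← sq_lt_one_iff_abs_lt_one, div_pow, hs2, div_lt_one (by positivity)]
      nlinarith [sin_sq_add_cos_sq x, sq_nonneg (t * cos x)]
    have h1 : HasDerivAt (fun x => t * sin x / √(1 + t ^ 2)) (t * cos x / √(1 + t ^ 2)) x :=
      ((hasDerivAt_sin x).const_mul t).div_const _
    rw [abs_lt] at hlt
    have h2 := ((hasDerivAt_arcsin hlt.1.ne' hlt.2.ne).comp x h1).div_const t
    refine h2.congr_deriv ?_
    have h3 : 1 - (t * sin x / √(1 + t ^ 2)) ^ 2 = (1 + (t * cos x) ^ 2) / (1 + t ^ 2) := by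
      rw [div_pow, hs2]
      field_simp
      nlinarith [sin_sq_add_cos_sq x]
    rw [h3, sqrt_div (by positivity)]
    have : 0 < √(1 + (t * cos x) ^ 2) := by positivity
    field_simp
  rw [intervalIntegral.integral_eq_sub_of_hasDerivAt hd]
  · simp [arctan_eq_arcsin]
  · apply Continuous.intervalIntegrable
    refine Continuous.div (by fun_prop) (by fun_prop) fun x => ?_
    positivity

lemma arsinh_integral (c : ℝ) : ∫ t in (0:ℝ)..1, c / √(1 + (t * c) ^ 2) = arsinh c := by
  have hd : ∀ t ∈ Set.uIcc (0:ℝ) 1, HasDerivAt (fun t => arsinh (t * c)) (c / √(1 + (t * c) ^ 2)) t := by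
    intro t _
    have := ((hasDerivAt_id t).mul_const c).arsinh
    refine this.congr_deriv ?_
    simp [div_eq_inv_mul]
  rw [intervalIntegral.integral_eq_sub_of_hasDerivAt hd]
  · simp
  · apply Continuous.intervalIntegrable
    refine Continuous.div (by fun_prop) (by fun_prop) fun x => ?_
    positivity

lemma integral_half : ∫ x in (0:ℝ)..(π / 2), arsinh (cos x) = catalanConstant := by
  rw [← integral_arctan_div]
  simp_rw [← arsinh_integral]
  rw [intervalIntegral_intervalIntegral_swap]
  · apply intervalIntegral.integral_congr_ae
    refine Filter.Eventually.of_forall fun t ht => ?_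
    rw [Set.uIoc_of_le zero_le_one] at ht
    exact inner_integral t ht.1
  · have hc : Continuous (Function.uncurry fun (x y : ℝ) => cos x / √(1 + (y * cos x) ^ 2)) := by
      refine Continuous.div (by fun_prop) (by fun_prop) fun x => ?_
      positivity
    refine (hc.continuousOn.integrableOn_compact
      ((isCompact_uIcc (a := 0) (b := π / 2)).prod (isCompact_uIcc (a := 0) (b := 1)))).mono_set (Set.prod_mono ?_ ?_)
    · exact Set.uIoc_subset_uIcc
    · exact Set.uIoc_subset_uIcc

noncomputable def fA (x : ℝ) : ℝ := |arsinh (cos x)|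

lemma fA_cont : Continuous fA := by
  unfold fA
  exact (continuous_arsinh.comp continuous_cos).abs

lemma fA_lip (x y : ℝ) : |fA x - fA y| ≤ |x - y| := by
  have h1 : LipschitzWith 1 arsinh := by
    apply lipschitzWith_of_nnnorm_deriv_le differentiable_arsinh
    intro x
    rw [(hasDerivAt_arsinh x).deriv, ← NNReal.coe_le_coe, coe_nnnorm, Real.norm_of_nonneg (by positivity)]
    refine inv_le_one_of_one_le₀ ?_
    rw [one_le_sqrt]
    nlinarith [sq_nonneg x]
  have h2 := h1.dist_le_mul (cos x) (cos y)
  simp only [Real.dist_eq, NNReal.coe_one, one_mul] at h2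
  exact (abs_abs_sub_abs_le_abs_sub _ _).trans (h2.trans (abs_cos_sub_cos_le x y))

lemma integral_full : ∫ x in (0:ℝ)..π, fA x = 2 * catalanConstant := by
  have hi : ∀ a b, IntervalIntegrable fA volume a b := fun a b => fA_cont.intervalIntegrable a b
  have h1 : ∫ x in (0:ℝ)..(π/2), fA x = catalanConstant := by
    rw [← integral_half]
    apply intervalIntegral.integral_congr
    intro x hx
    rw [Set.uIcc_of_le (by positivity)] at hx
    refine abs_of_nonneg ?_
    rw [arsinh_nonneg_iff]
    exact cos_nonneg_of_mem_Icc ⟨by linarith [hx.1, pi_pos], hx.2⟩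
  have h2 : ∫ x in (π/2)..π, fA x = ∫ x in (0:ℝ)..(π/2), fA x := by
    have := intervalIntegral.integral_comp_sub_left fA (a := π/2) (b := π) π
    rw [sub_self, show π - π/2 = π/2 by ring] at this
    rw [← this]
    congr 1
    ext x
    simp [fA, cos_pi_sub]
  rw [← intervalIntegral.integral_add_adjacent_intervals (hi 0 (π/2)) (hi _ _), h2, h1]
  ring

lemma riemann (n : ℕ) :
    |(π / (n + 1)) * ∑ k ∈ Finset.range (n + 1), fA (k * (π / (n + 1))) - 2 * catalanConstant|
      ≤ π * (π / (n + 1)) := by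
  set h : ℝ := π / (n + 1) with hh
  have hpos : 0 < h := by positivity
  have hi : ∀ a b, IntervalIntegrable fA volume a b := fun a b => fA_cont.intervalIntegrable a b
  have hs := intervalIntegral.sum_integral_adjacent_intervals (μ := volume) (f := fA)
    (a := fun k : ℕ => k * h) (n := n + 1) (fun k _ => hi _ _)
  have hend : ((n + 1 : ℕ) : ℝ) * h = π := by
    rw [hh]; push_cast; field_simp
  rw [hend] at hs
  simp only [Nat.cast_zero, zero_mul] at hs
  rw [integral_full] at hs
  rw [← hs, Finset.mul_sum, ← Finset.sum_sub_distrib]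
  refine (Finset.abs_sum_le_sum_abs _ _).trans ?_
  have hb : ∀ k ∈ Finset.range (n + 1),
      |h * fA (k * h) - ∫ x in (k * h)..((k + 1 : ℕ) * h), fA x| ≤ h * h := by
    intro k _
    have e : h * fA (k * h) = ∫ x in (k * h)..((k + 1 : ℕ) * h), fA (k * h) := by
      rw [intervalIntegral.integral_const]
      push_cast
      simp; ring_nf; simp
    rw [e, ← intervalIntegral.integral_sub (by simp) (hi _ _)]
    have := intervalIntegral.norm_integral_le_of_norm_le_const (a := k * h) (b := (k + 1 : ℕ) * h)
      (f := fun x => fA (k * h) - fA x) (C := h) ?_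
    · rw [Real.norm_eq_abs] at this
      refine this.trans (le_of_eq ?_)
      push_cast
      rw [show ((k:ℝ) + 1) * h - k * h = h by ring, abs_of_pos hpos]
    · intro x hx
      rw [Set.uIoc_of_le (by push_cast; nlinarith)] at hx
      refine (fA_lip _ _).trans ?_
      rw [abs_le]
      push_cast at hx
      constructor <;> nlinarith [hx.1, hx.2]
  refine (Finset.sum_le_sum hb).trans (le_of_eq ?_)
  rw [Finset.sum_const, Finset.card_range, nsmul_eq_mul, ← mul_assoc, hend]

end CatalanAux
namespace CatalanAux

open Matrix

/-- antisymmetric path matrix -/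
noncomputable def matQ (n : ℕ) : Matrix (Fin n) (Fin n) ℝ :=
  Matrix.of fun i j => if i.val + 1 = j.val then 1 else if j.val + 1 = i.val then -1 else 0

/-- adjacency matrix of the path -/
noncomputable def matA (n : ℕ) : Matrix (Fin n) (Fin n) ℝ :=
  Matrix.of fun i j => (if i.val + 1 = j.val then 1 else 0) + (if j.val + 1 = i.val then 1 else 0)

noncomputable def matT (x : ℝ) (n : ℕ) : Matrix (Fin n) (Fin n) ℝ :=
  Matrix.of fun i j => if i.val = j.val then x else
    if i.val + 1 = j.val then 1 else if j.val + 1 = i.val then -1 else 0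

lemma matT_eq (x : ℝ) (n : ℕ) : matT x n = x • (1 : Matrix (Fin n) (Fin n) ℝ) + matQ n := by
  ext i j
  simp only [matT, matQ, Matrix.of_apply, Matrix.add_apply, Matrix.smul_apply, Matrix.one_apply,
    Fin.ext_iff]
  split_ifs <;> first | omega | simp

lemma det_matT_rec (x : ℝ) (n : ℕ) :
    (matT x (n + 2)).det = x * (matT x (n + 1)).det + (matT x n).det := by
  rw [Matrix.det_succ_row_zero, Fin.sum_univ_succ, Fin.sum_univ_succ, Finset.sum_eq_zero, add_zero]
  · congr 1
    · have : (matT x (n + 2)).submatrix Fin.succ (Fin.succAbove 0) = matT x (n + 1) := by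
        ext i j
        simp [matT]
      rw [this]
      simp [matT]
    · rw [Matrix.det_succ_column_zero, Fin.sum_univ_succ, Finset.sum_eq_zero, add_zero]
      · have : (((matT x (n + 2)).submatrix Fin.succ (Fin.succAbove (Fin.succ 0))).submatrix
          (Fin.succAbove 0) Fin.succ) = matT x n := by
          ext i j
          simp only [matT, Matrix.submatrix_apply, Matrix.of_apply]
          have e1 : ((Fin.succ (Fin.succAbove (0 : Fin (n+1)) i)) : Fin (n+2)).val = i.val + 2 := by
            simp
          have e2 : ((Fin.succAbove (Fin.succ 0) (Fin.succ j)) : Fin (n+2)).val = j.val + 2 := by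
            rw [Fin.succAbove_of_le_castSucc]
            · simp
            · simp [Fin.le_def]
          rw [e1, e2]
          split_ifs <;> first | omega | rfl
        rw [this]
        simp [matT]
      · intro i _
        have e2 : ((Fin.succAbove (Fin.succ 0) 0) : Fin (n+2)).val = 0 := by
          rw [Fin.succAbove_of_castSucc_lt] <;> simp
        have : (matT x (n + 2)).submatrix Fin.succ (Fin.succAbove (Fin.succ 0)) i.succ 0 = 0 := by
          simp only [matT, Matrix.submatrix_apply, Matrix.of_apply, e2]
          simp
        rw [this]; simp
  · intro i _
    have : matT x (n + 2) 0 i.succ.succ = 0 := by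
      simp [matT]
    rw [this]; simp

lemma det_matT_zero (x : ℝ) : (matT x 0).det = 1 := by simp
lemma det_matT_one (x : ℝ) : (matT x 1).det = x := by simp [matT]

lemma det_matT_cosh (u : ℝ) (k : ℕ) :
    (matT (2 * sinh u) (2 * k)).det * cosh u = cosh ((2 * k + 1) * u) ∧
    (matT (2 * sinh u) (2 * k + 1)).det * cosh u = sinh ((2 * k + 2) * u) := by
  induction k with
  | zero =>
    constructor
    · simp
    · have := det_matT_one (2 * sinh u)
      simp only [mul_zero, zero_add, Nat.cast_zero]
      rw [this, sinh_two_mul]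
  | succ k ih =>
    have h1 := det_matT_rec (2 * sinh u) (2 * k)
    have h2 := det_matT_rec (2 * sinh u) (2 * k + 1)
    have hA : (matT (2 * sinh u) (2 * (k + 1))).det * cosh u = cosh ((2 * (k + 1 : ℕ) + 1) * u) := by
      rw [show 2 * (k + 1) = 2 * k + 2 by ring, h1, add_mul, mul_assoc, ih.1, ih.2]
      push_cast
      rw [show (2 * ((k:ℝ) + 1) + 1) * u = (2 * k + 2) * u + u by ring,
        show (2 * (k:ℝ) + 1) * u = (2 * k + 2) * u - u by ring, cosh_add, cosh_sub]
      ring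
    refine ⟨hA, ?_⟩
    rw [show 2 * (k + 1) + 1 = 2 * k + 1 + 2 by ring, h2, add_mul, mul_assoc, ih.2]
    rw [show 2 * k + 1 + 1 = 2 * (k + 1) by ring, hA]
    push_cast
    rw [show (2 * ((k:ℝ) + 1) + 2) * u = (2 * (k + 1) + 1) * u + u by ring,
        show (2 * (k:ℝ) + 2) * u = (2 * (k + 1) + 1) * u - u by ring, sinh_add, sinh_sub]
    ring

lemma log_cosh_bounds (x : ℝ) : |x| - log 2 ≤ log (cosh x) ∧ log (cosh x) ≤ |x| := by
  rw [← cosh_abs x]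
  have h0 := abs_nonneg x
  set y := |x|
  constructor
  · rw [← log_exp y, ← log_div (exp_ne_zero _) two_ne_zero]
    apply log_le_log (by positivity)
    rw [log_exp, cosh_eq]
    have := exp_pos (-y)
    linarith
  · conv_rhs => rw [← log_exp y]
    apply log_le_log (cosh_pos _)
    rw [cosh_eq]
    have : exp (-y) ≤ exp y := exp_le_exp.2 (by linarith)
    linarith

lemma log_det_matT (u : ℝ) (k : ℕ) :
    0 < (matT (2 * sinh u) (2 * k)).det ∧
    |log (matT (2 * sinh u) (2 * k)).det - 2 * k * (|u|)| ≤ log 2 := by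
  have h := (det_matT_cosh u k).1
  have hc := cosh_pos u
  have hd : (matT (2 * sinh u) (2 * k)).det = cosh ((2 * k + 1) * u) / cosh u := by
    rw [← h]; field_simp
  refine ⟨by rw [hd]; exact div_pos (cosh_pos _) hc, ?_⟩
  rw [hd, log_div (cosh_pos _).ne' hc.ne']
  have h1 := log_cosh_bounds u
  have h2 := log_cosh_bounds ((2 * k + 1) * u)
  rw [abs_mul, abs_of_nonneg (show (0:ℝ) ≤ 2 * k + 1 by positivity)] at h2
  rw [abs_le]
  constructor <;> linarith [h1.1, h1.2, h2.1, h2.2]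

/-- eigenvector matrix -/
noncomputable def theta (m : ℕ) (k : Fin m) : ℝ := (k.val + 1) * (π / (m + 1))

noncomputable def matE (m : ℕ) : Matrix (Fin m) (Fin m) ℝ :=
  Matrix.of fun i k => sin ((i.val + 1) * theta m k)

lemma matA_mul_vec (m : ℕ) (g : ℕ → ℝ) (h0 : g 0 = 0) (hm : g (m + 1) = 0) (i : Fin m) :
    ∑ j : Fin m, matA m i j * g (j.val + 1) = g i.val + g (i.val + 2) := by
  simp only [matA, Matrix.of_apply, add_mul, ite_mul, one_mul, zero_mul, Finset.sum_add_distrib]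
  rw [add_comm]
  congr 1
  · rw [Fin.sum_univ_eq_sum_range (fun j => if j + 1 = i.val then g (j + 1) else 0) m]
    rcases Nat.eq_zero_or_pos i.val with hi | hi
    · rw [hi, h0]; apply Finset.sum_eq_zero; intro j _; simp
    · rw [Finset.sum_eq_single (i.val - 1)]
      · rw [if_pos (by omega)]; congr 1; omega
      · intro b _ hb; rw [if_neg (by omega)]
      · intro hb; simp at hb; omega
  · rw [Fin.sum_univ_eq_sum_range (fun j => if i.val + 1 = j then g (j + 1) else 0) m,
      Finset.sum_ite_eq]
    split_ifs with h
    · rfl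
    · simp at h
      rw [show i.val + 2 = m + 1 by omega, hm]

lemma matA_mul_matE (m : ℕ) :
    matA m * matE m = matE m * Matrix.diagonal (fun k => 2 * cos (theta m k)) := by
  ext i k
  rw [Matrix.mul_diagonal, Matrix.mul_apply]
  have := matA_mul_vec m (fun t => sin (t * theta m k)) (by simp) (by
    have : (((m + 1 : ℕ) : ℝ)) * theta m k = ((k.val + 1 : ℕ) : ℝ) * π := by
      unfold theta; push_cast; field_simp
    change sin (((m + 1 : ℕ) : ℝ) * theta m k) = 0
    rw [this, sin_nat_mul_pi]) i
  simp only [matE, Matrix.of_apply]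
  push_cast at this
  rw [this, show ((i.val:ℝ) + 2) * theta m k = (i.val + 1) * theta m k + theta m k by ring,
    show (i.val:ℝ) * theta m k = (i.val + 1) * theta m k - theta m k by ring, sin_add, sin_sub]
  ring

lemma theta_mem (m : ℕ) (k : Fin m) : 0 < theta m k ∧ theta m k < π := by
  unfold theta
  have hk : (k.val : ℝ) + 1 ≤ m := by exact_mod_cast k.2
  have := pi_pos
  refine ⟨by positivity, ?_⟩
  rw [← mul_div_assoc, div_lt_iff₀ (by positivity)]
  nlinarith

lemma theta_inj (m : ℕ) : Function.Injective (fun k : Fin m => 2 * cos (theta m k)) := by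
  intro a b h
  have h' : cos (theta m a) = cos (theta m b) := by simpa using h
  have := injOn_cos ⟨(theta_mem m a).1.le, (theta_mem m a).2.le⟩
    ⟨(theta_mem m b).1.le, (theta_mem m b).2.le⟩ h'
  unfold theta at this
  have hp : π / ((m:ℝ) + 1) ≠ 0 := by positivity
  have := mul_right_cancel₀ hp this
  ext
  have : (a.val : ℝ) = b.val := by linarith
  exact_mod_cast this

lemma det_matE (m : ℕ) : (matE m).det ≠ 0 := by
  have hli : LinearIndependent ℝ (matE m).col := by
    refine Module.End.eigenvectors_linearIndependent' (Matrix.toLin' (matA m))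
      (fun k => 2 * cos (theta m k)) (theta_inj m) _ fun k => ?_
    rw [Module.End.hasEigenvector_iff, Module.End.mem_eigenspace_iff]
    constructor
    · rw [Matrix.toLin'_apply]
      ext i
      have := congrFun (congrFun (matA_mul_matE m) i) k
      rw [Matrix.mul_diagonal, Matrix.mul_apply] at this
      simp only [Matrix.mulVec, dotProduct, Matrix.col_apply, Pi.smul_apply, smul_eq_mul]
      rw [this, mul_comm]
    · intro h
      have h0 : 0 < m := lt_of_le_of_lt (Nat.zero_le _) k.2
      have := congrFun h ⟨0, h0⟩
      simp only [Matrix.col_apply, matE, Matrix.of_apply, Pi.zero_apply] at this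
      have hs := sin_pos_of_pos_of_lt_pi (theta_mem m k).1 (theta_mem m k).2
      simp at this
      linarith
  have := Matrix.linearIndependent_cols_iff_isUnit.1 hli
  exact ((Matrix.isUnit_iff_isUnit_det _).1 this).ne_zero

open scoped Kronecker

noncomputable def matK (m n : ℕ) : Matrix (Fin m × Fin n) (Fin m × Fin n) ℝ :=
  (1 : Matrix (Fin m) (Fin m) ℝ) ⊗ₖ matQ n + matA m ⊗ₖ (1 : Matrix (Fin n) (Fin n) ℝ)

lemma det_matK (m n : ℕ) :
    (matK m n).det = ∏ k : Fin m, (matT (2 * cos (theta m k)) n).det := by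
  set d : Fin m → ℝ := fun k => 2 * cos (theta m k)
  have h1 : matK m n * (matE m ⊗ₖ (1 : Matrix (Fin n) (Fin n) ℝ)) =
      (matE m ⊗ₖ (1 : Matrix (Fin n) (Fin n) ℝ)) *
      ((1 : Matrix (Fin m) (Fin m) ℝ) ⊗ₖ matQ n +
        Matrix.diagonal d ⊗ₖ (1 : Matrix (Fin n) (Fin n) ℝ)) := by
    rw [matK, add_mul, mul_add, ← Matrix.mul_kronecker_mul, ← Matrix.mul_kronecker_mul,
      ← Matrix.mul_kronecker_mul, ← Matrix.mul_kronecker_mul, matA_mul_matE]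
    simp [d]
  have h2 : ((1 : Matrix (Fin m) (Fin m) ℝ) ⊗ₖ matQ n +
        Matrix.diagonal d ⊗ₖ (1 : Matrix (Fin n) (Fin n) ℝ)) =
      (Matrix.blockDiagonal (fun k => matT (d k) n)).submatrix (Equiv.prodComm _ _)
        (Equiv.prodComm _ _) := by
    ext ⟨i, j⟩ ⟨i', j'⟩
    simp only [Matrix.add_apply, Matrix.kroneckerMap_apply, Matrix.submatrix_apply,
      Equiv.prodComm_apply, Prod.swap_prod_mk, Matrix.blockDiagonal_apply, matT_eq,
      Matrix.diagonal_apply, Matrix.smul_apply, Matrix.one_apply]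
    split_ifs <;> simp <;> ring
  have h3 := congrArg Matrix.det h1
  rw [Matrix.det_mul, Matrix.det_mul, mul_comm] at h3
  have h4 : (matE m ⊗ₖ (1 : Matrix (Fin n) (Fin n) ℝ)).det ≠ 0 := by
    rw [Matrix.det_kronecker]
    simp [det_matE m]
  rw [mul_left_cancel₀ h4 h3, h2, Matrix.det_submatrix_equiv_self, Matrix.det_blockDiagonal]

end CatalanAux
set_option linter.all false
namespace CatalanAux

section Abstract

variable {V : Type*} [Fintype V] [DecidableEq V] {N : ℕ}

/-- order sign -/
noncomputable def os (e : V ≃ Fin N) (x y : V) : ℝ := if e x < e y then 1 else -1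

lemma os_sq (e : V ≃ Fin N) (x y : V) : os e x y * os e x y = 1 := by
  unfold os; split_ifs <;> norm_num

/-- inversion sign of `f` on `S` -/
noncomputable def invS (e : V ≃ Fin N) (S : Finset V) (f : V → V) : ℝ :=
  ∏ x ∈ S, ∏ y ∈ S, if e x < e y then os e (f x) (f y) else 1

lemma sign_eq_invS (e : V ≃ Fin N) (σ : Equiv.Perm V) :
    ((Equiv.Perm.sign σ : ℤ) : ℝ) = invS e Finset.univ σ := by
  rw [← Equiv.Perm.sign_symm_trans_trans σ e, Equiv.Perm.sign_eq_prod_prod_Ioi]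
  unfold invS os
  rw [← e.symm.prod_comp]
  push_cast
  refine Finset.prod_congr rfl fun i _ => ?_
  rw [← e.symm.prod_comp, ← Finset.prod_filter]
  refine Finset.prod_congr ?_ fun j _ => ?_
  · ext; simp
  · change (((if e (σ (e.symm i)) < e (σ (e.symm j)) then (1 : ℤˣ) else -1 : ℤˣ) : ℤ) : ℝ) = _
    split_ifs <;> simp

lemma prod_pair (e : V ≃ Fin N) (S : Finset V) (F : V → V → ℝ) (hF : ∀ x, F x x = 1) :
    ∏ x ∈ S, ∏ y ∈ S, F x y =
      ∏ x ∈ S, ∏ y ∈ S, if e x < e y then F x y * F y x else 1 := by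
  have h1 : ∀ x y, F x y = (if e x < e y then F x y else 1) * (if e y < e x then F x y else 1) := by
    intro x y
    rcases lt_trichotomy (e x) (e y) with h | h | h
    · simp [h, h.not_gt]
    · have := e.injective h
      subst this
      simp [hF]
    · simp [h, h.not_gt]
  have h2 : ∏ x ∈ S, ∏ y ∈ S, F x y = (∏ x ∈ S, ∏ y ∈ S, if e x < e y then F x y else 1) *
      ∏ x ∈ S, ∏ y ∈ S, if e y < e x then F x y else 1 := by
    rw [← Finset.prod_mul_distrib]
    refine Finset.prod_congr rfl fun x _ => ?_
    rw [← Finset.prod_mul_distrib]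
    exact Finset.prod_congr rfl fun y _ => h1 x y
  rw [h2]
  conv_lhs => arg 2; rw [Finset.prod_comm]
  rw [← Finset.prod_mul_distrib]
  refine Finset.prod_congr rfl fun x _ => ?_
  rw [← Finset.prod_mul_distrib]
  refine Finset.prod_congr rfl fun y _ => ?_
  split_ifs <;> simp

/-- `S` and its complement are swapped by `f` -/
def Swaps (S : Finset V) (f : V → V) : Prop := ∀ x, f x ∈ S ↔ x ∉ S

lemma Swaps.compl {S : Finset V} {f : V → V} (h : Swaps S f) : Swaps Sᶜ f := by
  intro x
  have := h x
  simp only [Finset.mem_compl]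
  tauto

lemma prod_swap {S : Finset V} {f : V → V} (hb : Function.Bijective f) (h : Swaps S f) (g : V → ℝ) :
    ∏ x ∈ S, g (f x) = ∏ x ∈ Sᶜ, g x := by
  refine Finset.prod_bij (fun x _ => f x) ?_ ?_ ?_ ?_
  · intro x hx
    have := h x
    rw [Finset.mem_compl]; tauto
  · intro x _ y _ hxy
    exact hb.1 hxy
  · intro y hy
    obtain ⟨x, rfl⟩ := hb.2 y
    have := h x
    rw [Finset.mem_compl] at hy
    exact ⟨x, by tauto, rfl⟩
  · intros; rfl

lemma prod_all {S : Finset V} {f : V → V} (hb : Function.Bijective f) (h : Swaps S f) (g : V → ℝ) :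
    ∏ x, g x = ∏ x ∈ S, g x * g (f x) := by
  rw [Finset.prod_mul_distrib, prod_swap hb h, Finset.prod_mul_prod_compl]

/-- the constant -/
noncomputable def kS (e : V ≃ Fin N) (S : Finset V) : ℝ := ∏ x ∈ S, ∏ y ∈ Sᶜ, os e x y

lemma prod_sq {ι : Type*} (S : Finset ι) (g : ι → ℝ) (h : ∀ x ∈ S, g x * g x = 1) :
    (∏ x ∈ S, g x) * (∏ x ∈ S, g x) = 1 := by
  rw [← Finset.prod_mul_distrib]
  exact Finset.prod_eq_one h

lemma kS_sq (e : V ≃ Fin N) (S : Finset V) : kS e S * kS e S = 1 :=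
  prod_sq _ _ fun _ _ => prod_sq _ _ fun _ _ => os_sq _ _ _

lemma sign_split (e : V ≃ Fin N) (S : Finset V) (σ : Equiv.Perm V) (h : Swaps S σ) :
    ((Equiv.Perm.sign σ : ℤ) : ℝ) = invS e S σ * invS e Sᶜ σ * (kS e S * kS e Sᶜ) := by
  rw [sign_eq_invS e]
  have hmix : (∏ x ∈ S, ∏ y ∈ Sᶜ, if e x < e y then os e (σ x) (σ y) else 1) *
      (∏ x ∈ Sᶜ, ∏ y ∈ S, if e x < e y then os e (σ x) (σ y) else 1) = kS e S * kS e Sᶜ := by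
    conv_lhs => arg 2; rw [Finset.prod_comm]
    have e2 : kS e Sᶜ = ∏ x ∈ S, ∏ y ∈ Sᶜ, os e (σ x) (σ y) := by
      rw [prod_swap σ.bijective h (fun x => ∏ y ∈ Sᶜ, os e x (σ y))]
      unfold kS
      refine Finset.prod_congr rfl fun x _ => ?_
      rw [prod_swap σ.bijective h.compl (fun y => os e x y)]
    rw [e2, kS, ← Finset.prod_mul_distrib, ← Finset.prod_mul_distrib]
    refine Finset.prod_congr rfl fun x hx => ?_
    rw [← Finset.prod_mul_distrib, ← Finset.prod_mul_distrib]
    refine Finset.prod_congr rfl fun y hy => ?_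
    have hne : x ≠ y := by
      rintro rfl
      exact (Finset.mem_compl.1 hy) hx
    have h1 : e x ≠ e y := fun h => hne (e.injective h)
    have h2 : e (σ x) ≠ e (σ y) := fun h => hne (σ.injective (e.injective h))
    unfold os
    rcases lt_or_gt_of_ne h1 with a | a <;> rcases lt_or_gt_of_ne h2 with b | b <;>
      simp [a, b, a.not_gt, b.not_gt]
  unfold invS
  rw [← Finset.prod_mul_prod_compl S]
  simp_rw [← Finset.prod_mul_prod_compl S (fun y => if e _ < e y then os e (σ _) (σ y) else 1)]
  rw [Finset.prod_mul_distrib, Finset.prod_mul_distrib, ← hmix]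
  ring

/-- crossing indicator -/
noncomputable def chi (e : V ≃ Fin N) (τ : V → V) (x y : V) : ℝ :=
  if e x < e y ∧ e y < e (τ x) ∧ e (τ x) < e (τ y) then -1 else 1

noncomputable def crossX (e : V ≃ Fin N) (τ : V → V) : ℝ := ∏ x, ∏ y, chi e τ x y

lemma cross_local (a b c d : ℕ) (h1 : a < c) (h2 : a ≠ b) (h3 : a ≠ d) (h4 : b ≠ c)
    (h5 : b ≠ d) (h6 : c ≠ d) (X : ℕ → ℕ → ℕ → ℕ → ℝ)
    (hX : ∀ a b c d, X a b c d = if a < c ∧ c < b ∧ b < d then -1 else 1) :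
    (X a b c d * X a b d c * X b a c d * X b a d c) *
      (X c d a b * X c d b a * X d c a b * X d c b a) =
    (if b < d then 1 else -1) * -((if a < d then 1 else -1) * (if c < b then 1 else -1)) := by
  have hab := lt_or_gt_of_ne h2
  have had := lt_or_gt_of_ne h3
  have hbc := lt_or_gt_of_ne h4
  have hbd := lt_or_gt_of_ne h5
  have hcd := lt_or_gt_of_ne h6
  simp only [hX]
  rcases hab with hab | hab <;> rcases had with had | had <;> rcases hbc with hbc | hbc <;>
    rcases hbd with hbd | hbd <;> rcases hcd with hcd | hcd <;>
    first
    | omega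
    | simp [h1, hab, had, hbc, hbd, hcd, h1.not_gt, hab.not_gt, had.not_gt, hbc.not_gt,
        hbd.not_gt, hcd.not_gt]

lemma invS_cross (e : V ≃ Fin N) (S : Finset V) : ∃ c : ℝ, c * c = 1 ∧
    ∀ τ : V → V, Function.Involutive τ → Swaps S τ →
      invS e S τ = c * ((∏ x ∈ S, os e x (τ x)) * crossX e τ) := by
  set c1 : ℝ := ∏ x ∈ S, ∏ y ∈ S, if e x < e y then -1 else 1 with hc1
  have hc1s : c1 * c1 = 1 := prod_sq _ _ fun _ _ => prod_sq _ _ fun _ _ => by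
    split_ifs <;> norm_num
  refine ⟨c1 * kS e S, ?_, ?_⟩
  · have := kS_sq e S
    calc _ = (c1 * c1) * (kS e S * kS e S) := by ring
      _ = 1 := by rw [hc1s, this, one_mul]
  intro τ hτ hs
  have hb := hτ.bijective
  set P := ∏ x ∈ S, os e x (τ x) with hP
  have hPs : P * P = 1 := prod_sq _ _ fun _ _ => os_sq _ _ _
  have hne : ∀ x ∈ S, ∀ y ∈ S, e x ≠ e (τ y) := by
    intro x hx y hy h
    have := e.injective h
    have h2 := hs y
    rw [← this] at h2
    tauto
  -- Y
  set Y : V → V → ℝ := fun x y =>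
    chi e τ x y * chi e τ x (τ y) * chi e τ (τ x) y * chi e τ (τ x) (τ y) with hY
  have hX1 : crossX e τ = ∏ x ∈ S, ∏ y ∈ S, Y x y := by
    unfold crossX
    rw [prod_all hb hs]
    refine Finset.prod_congr rfl fun x _ => ?_
    rw [prod_all hb hs, prod_all hb hs (fun y => chi e τ (τ x) y), ← Finset.prod_mul_distrib]
    refine Finset.prod_congr rfl fun y _ => ?_
    simp only [hY]; ring
  have hYd : ∀ x, Y x x = 1 := by
    intro x
    simp only [hY, chi, hτ x]
    have : ∀ a b : Fin N, ¬ (a < b ∧ b < b ∧ b < a) := fun a b h => lt_irrefl _ h.2.1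
    simp
  have hZ : ∏ x ∈ S, ∏ y ∈ S, (if x = y then 1 else os e x (τ y)) = kS e S * P := by
    have : kS e S = ∏ x ∈ S, ∏ y ∈ S, os e x (τ y) := by
      unfold kS
      refine Finset.prod_congr rfl fun x _ => ?_
      rw [prod_swap hb hs]
    rw [this, hP, ← Finset.prod_mul_distrib]
    refine Finset.prod_congr rfl fun x hx => ?_
    have h3 : os e x (τ x) = ∏ y ∈ S, if x = y then os e x (τ y) else 1 := by
      rw [Finset.prod_ite_eq, if_pos hx]
    rw [h3, ← Finset.prod_mul_distrib]
    refine Finset.prod_congr rfl fun y _ => ?_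
    split_ifs
    · rw [os_sq]
    · simp
  have hmain : crossX e τ = invS e S τ * (c1 * (kS e S * P)) := by
    have hZ' := prod_pair e S (fun x y => if x = y then (1 : ℝ) else os e x (τ y)) (by simp)
    rw [hX1, prod_pair e S Y hYd, ← hZ, hZ', hc1, invS,
      ← Finset.prod_mul_distrib, ← Finset.prod_mul_distrib]
    refine Finset.prod_congr rfl fun x hx => ?_
    rw [← Finset.prod_mul_distrib, ← Finset.prod_mul_distrib]
    refine Finset.prod_congr rfl fun y hy => ?_
    by_cases h : e x < e y
    · have hxy : x ≠ y := by rintro rfl; exact absurd h (lt_irrefl _)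
      rw [if_pos h, if_pos h, if_pos h, if_pos h, if_neg hxy, if_neg hxy.symm]
      have := cross_local (e x) (e (τ x)) (e y) (e (τ y)) h
        (fun h => hne x hx x hx (Fin.ext h)) (fun h => hne x hx y hy (Fin.ext h))
        (fun h => hne y hy x hx (Fin.ext h.symm))
        (fun h => hxy (hb.1 (e.injective (Fin.ext h))))
        (fun h => hne y hy y hy (Fin.ext h)) _ (fun _ _ _ _ => rfl)
      simp only [hY, chi, os, hτ x, hτ y, Fin.lt_def]
      rw [this]
      ring
    · simp [h]
  calc invS e S τ = invS e S τ * ((c1 * c1) * (kS e S * kS e S) * (P * P)) := by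
        rw [hc1s, kS_sq, hPs]; ring
    _ = _ := by rw [hmain]; ring

end Abstract

end CatalanAux
namespace CatalanAux

section Geometry

variable {m n : ℕ}

abbrev eV (m n : ℕ) : Fin m × Fin n ≃ Fin (m * n) := finProdFinEquiv

lemma eV_lt (x y : Fin m × Fin n) :
    eV m n x < eV m n y ↔ x.1.val < y.1.val ∨ (x.1.val = y.1.val ∧ x.2.val < y.2.val) := by
  rw [Fin.lt_def]
  simp only [eV, finProdFinEquiv_apply_val]
  have hx := x.2.2
  have hy := y.2.2
  rcases lt_trichotomy x.1.val y.1.val with h | h | h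
  · have : n * (x.1.val + 1) ≤ n * y.1.val := Nat.mul_le_mul_left _ h
    constructor
    · intro _; exact Or.inl h
    · intro _; rw [mul_add] at this; omega
  · rw [h]; omega
  · have : n * (y.1.val + 1) ≤ n * x.1.val := Nat.mul_le_mul_left _ h
    rw [mul_add] at this
    constructor
    · intro h; omega
    · intro h'; omega

/-- grid adjacency, spelled out -/
def gAdj (v w : Fin m × Fin n) : Prop :=
  (v.1.val = w.1.val ∧ (v.2.val + 1 = w.2.val ∨ w.2.val + 1 = v.2.val)) ∨
  (v.2.val = w.2.val ∧ (v.1.val + 1 = w.1.val ∨ w.1.val + 1 = v.1.val))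

/-- matching involutions -/
def IsMI (τ : Fin m × Fin n → Fin m × Fin n) : Prop :=
  Function.Involutive τ ∧ ∀ v, gAdj v (τ v)

lemma ite_one_mul_ite (P Q R : Prop) [Decidable P] [Decidable Q] [Decidable R]
    (h : P ↔ Q ∨ R) (h' : ¬ (Q ∧ R)) :
    (if P then (-1 : ℝ) else 1) = (if Q then -1 else 1) * (if R then -1 else 1) := by
  by_cases hQ : Q <;> by_cases hR : R <;> simp_all

lemma prod_row (i : Fin m) (j : ℕ) (hj : j ≤ n) :
    ∏ y : Fin m × Fin n, (if y.1.val = i.val ∧ y.2.val < j then (-1 : ℝ) else 1) = (-1) ^ j := by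
  rw [Fintype.prod_prod_type, Finset.prod_eq_single i]
  · simp only [true_and]
    rw [Fin.prod_univ_eq_prod_range (fun k => if k < j then (-1 : ℝ) else 1) n,
      ← Finset.prod_filter, Finset.prod_const]
    congr 1
    have : Finset.filter (fun k => k < j) (Finset.range n) = Finset.range j := by
      ext k; simp; omega
    rw [this, Finset.card_range]
  · intro b _ hb
    refine Finset.prod_eq_one fun k _ => ?_
    rw [if_neg]
    intro h
    exact hb (Fin.ext h.1)
  · simp

lemma chi_row (τ : Fin m × Fin n → Fin m × Fin n) (hτ : IsMI τ) (x : Fin m × Fin n)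
    (hx : x.1.val + 1 = (τ x).1.val) :
    ∏ y, chi (eV m n) τ x y = (-1) ^ x.2.val *
      ∏ y : Fin m × Fin n, (if y.1.val + 1 = (τ y).1.val ∧ y.1.val = x.1.val ∧ y.2.val ≠ x.2.val
        then (-1 : ℝ) else 1) := by
  obtain ⟨hinv, hadj⟩ := hτ
  have hx2 : x.2.val = (τ x).2.val := by
    have := hadj x
    unfold gAdj at this; omega
  -- no vertex matched with position of x or τ x except themselves
  have hinj : ∀ y z, (τ y).1.val = (τ z).1.val → (τ y).2.val = (τ z).2.val →
      y.1.val = z.1.val ∧ y.2.val = z.2.val := by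
    intro y z h1 h2
    have : τ y = τ z := Prod.ext (Fin.ext h1) (Fin.ext h2)
    have := hinv.injective this
    rw [this]; exact ⟨rfl, rfl⟩
  have hττ : ∀ y, τ (τ y) = y := hinv
  have hxy : ∀ y, (τ y).1.val = (τ x).1.val → (τ y).2.val = (τ x).2.val →
      y.1.val = x.1.val ∧ y.2.val = x.2.val := fun y => hinj y x
  -- step 1
  have s1 : ∀ y, chi (eV m n) τ x y =
      (if y.1.val + 1 = (τ y).1.val ∧ y.1.val = x.1.val ∧ x.2.val < y.2.val then -1 else 1) *
      (if y.1.val + 1 = (τ y).1.val ∧ y.1.val = x.1.val + 1 ∧ y.2.val < x.2.val then -1 else 1) := by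
    intro y
    unfold chi
    apply ite_one_mul_ite
    · rw [eV_lt, eV_lt, eV_lt]
      have a1 := hadj y
      have a2 := hxy y
      unfold gAdj at a1
      omega
    · omega
  -- step 2
  have s2 : ∏ y : Fin m × Fin n, (if y.1.val = (τ x).1.val ∧ y.2.val < x.2.val then (-1 : ℝ) else 1)
      = (-1) ^ x.2.val := prod_row (τ x).1 x.2.val x.2.2.le
  have s3 : ∀ y : Fin m × Fin n, (if y.1.val = (τ x).1.val ∧ y.2.val < x.2.val then (-1 : ℝ) else 1)
      = (if y.1.val + 1 = (τ y).1.val ∧ y.1.val = x.1.val + 1 ∧ y.2.val < x.2.val then -1 else 1) *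
        ((if (τ y).1.val + 1 = y.1.val ∧ y.1.val = x.1.val + 1 ∧ y.2.val < x.2.val then -1 else 1) *
        (if (τ y).1.val = y.1.val ∧ y.1.val = x.1.val + 1 ∧ y.2.val < x.2.val then -1 else 1)) := by
    intro y
    have a1 := hadj y
    unfold gAdj at a1
    rw [ite_one_mul_ite _ (y.1.val + 1 = (τ y).1.val ∧ y.1.val = x.1.val + 1 ∧ y.2.val < x.2.val)
      (((τ y).1.val + 1 = y.1.val ∧ y.1.val = x.1.val + 1 ∧ y.2.val < x.2.val) ∨
        ((τ y).1.val = y.1.val ∧ y.1.val = x.1.val + 1 ∧ y.2.val < x.2.val))]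
    · congr 1
      apply ite_one_mul_ite
      · rfl
      · omega
    · omega
    · omega
  have s4 : ∏ y : Fin m × Fin n,
      (if (τ y).1.val = y.1.val ∧ y.1.val = x.1.val + 1 ∧ y.2.val < x.2.val then (-1 : ℝ) else 1) = 1 := by
    refine Finset.prod_involution (fun y _ => τ y) ?_ ?_ ?_ ?_
    · intro y _
      rw [hττ y]
      have a1 := hadj y
      have a2 := hxy y
      have a3 := hinj (τ y) x
      rw [hττ y] at a3
      unfold gAdj at a1
      split_ifs
      · norm_num
      · exfalso; omega
      · exfalso; omega
      · norm_num
    · intro y _ _ h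
      have a1 := hadj y
      rw [h] at a1
      unfold gAdj at a1
      omega
    · intros; simp
    · intros; exact hinv _
  have s5 : ∏ y : Fin m × Fin n,
      (if (τ y).1.val + 1 = y.1.val ∧ y.1.val = x.1.val + 1 ∧ y.2.val < x.2.val then (-1 : ℝ) else 1) =
      ∏ y : Fin m × Fin n,
      (if y.1.val + 1 = (τ y).1.val ∧ y.1.val = x.1.val ∧ y.2.val < x.2.val then (-1 : ℝ) else 1) := by
    rw [← Equiv.prod_comp (Function.Involutive.toPerm τ hinv)]
    refine Finset.prod_congr rfl fun y _ => ?_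
    simp only [Function.Involutive.coe_toPerm, hττ]
    have a1 := hadj y
    unfold gAdj at a1
    refine if_congr ?_ rfl rfl
    omega
  have s6 : ∀ y : Fin m × Fin n,
    (if y.1.val + 1 = (τ y).1.val ∧ y.1.val = x.1.val ∧ y.2.val ≠ x.2.val then (-1 : ℝ) else 1) =
      (if y.1.val + 1 = (τ y).1.val ∧ y.1.val = x.1.val ∧ x.2.val < y.2.val then -1 else 1) *
      (if y.1.val + 1 = (τ y).1.val ∧ y.1.val = x.1.val ∧ y.2.val < x.2.val then -1 else 1) := by
    intro y
    apply ite_one_mul_ite <;> omega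
  rw [Finset.prod_congr rfl fun y _ => s3 y, Finset.prod_mul_distrib, Finset.prod_mul_distrib,
    s4, s5, mul_one] at s2
  rw [Finset.prod_congr rfl fun y _ => s1 y, Finset.prod_congr rfl fun y _ => s6 y,
    Finset.prod_mul_distrib, Finset.prod_mul_distrib, ← s2]
  have hsq := prod_sq Finset.univ (fun y : Fin m × Fin n =>
    (if y.1.val + 1 = (τ y).1.val ∧ y.1.val = x.1.val ∧ y.2.val < x.2.val then (-1 : ℝ) else 1))
    (fun y _ => by split_ifs <;> norm_num)
  linear_combination (-(∏ y : Fin m × Fin n, (if y.1.val + 1 = (τ y).1.val ∧ y.1.val = x.1.val ∧ x.2.val < y.2.val then (-1:ℝ) else 1)) *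
      (∏ y : Fin m × Fin n, (if y.1.val + 1 = (τ y).1.val ∧ y.1.val = x.1.val + 1 ∧ y.2.val < x.2.val then (-1:ℝ) else 1))) * hsq

lemma chi_row' (τ : Fin m × Fin n → Fin m × Fin n) (hτ : IsMI τ) (x : Fin m × Fin n)
    (hx : ¬ x.1.val + 1 = (τ x).1.val) :
    ∏ y, chi (eV m n) τ x y = 1 := by
  refine Finset.prod_eq_one fun y _ => ?_
  unfold chi
  rw [if_neg]
  rw [eV_lt, eV_lt, eV_lt]
  have a1 := hτ.2 x
  unfold gAdj at a1
  omega

/-- weight of upward vertices -/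
noncomputable def upW (τ : Fin m × Fin n → Fin m × Fin n) (x : Fin m × Fin n) : ℝ :=
  if x.1.val + 1 = (τ x).1.val then (-1) ^ x.2.val else 1

lemma crossX_eq (τ : Fin m × Fin n → Fin m × Fin n) (hτ : IsMI τ) :
    crossX (eV m n) τ = ∏ x, upW τ x := by
  have h1 : ∀ x, ∏ y, chi (eV m n) τ x y = upW τ x *
      ∏ y : Fin m × Fin n, (if x.1.val + 1 = (τ x).1.val ∧ y.1.val + 1 = (τ y).1.val ∧
        y.1.val = x.1.val ∧ y.2.val ≠ x.2.val then (-1 : ℝ) else 1) := by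
    intro x
    unfold upW
    by_cases hx : x.1.val + 1 = (τ x).1.val
    · rw [chi_row τ hτ x hx, if_pos hx]
      simp only [hx, true_and]
    · rw [chi_row' τ hτ x hx, if_neg hx]
      simp [hx]
  unfold crossX
  rw [Finset.prod_congr rfl fun x _ => h1 x, Finset.prod_mul_distrib,
    prod_pair (eV m n) Finset.univ (fun x y => if x.1.val + 1 = (τ x).1.val ∧ y.1.val + 1 = (τ y).1.val ∧
        y.1.val = x.1.val ∧ y.2.val ≠ x.2.val then (-1 : ℝ) else 1) (by simp)]
  convert mul_one _
  refine Finset.prod_eq_one fun x _ => Finset.prod_eq_one fun y _ => ?_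
  split_ifs <;> first | (exfalso; omega) | norm_num

/-- black vertices -/
def blk (m n : ℕ) : Finset (Fin m × Fin n) := Finset.univ.filter fun x => Even (x.1.val + x.2.val)

lemma mem_blk (x : Fin m × Fin n) : x ∈ blk m n ↔ (x.1.val + x.2.val) % 2 = 0 := by
  simp [blk, Nat.even_iff]

lemma swaps_of_adj (f : Fin m × Fin n → Fin m × Fin n) (h : ∀ v, gAdj v (f v)) :
    Swaps (blk m n) f := by
  intro x
  rw [mem_blk, mem_blk]
  have := h x
  unfold gAdj at this
  omega

/-- the gauge -/
noncomputable def gD (c : ℕ) (x : Fin m × Fin n) : ℝ := (-1) ^ ((x.1.val + c) / 2)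

lemma matK_apply (x y : Fin m × Fin n) (h : gAdj x y) :
    matK m n x y = if x.2.val + 1 = y.2.val then 1 else if y.2.val + 1 = x.2.val then -1 else 1 := by
  unfold gAdj at h
  simp only [matK, matQ, matA, Matrix.add_apply, Matrix.kroneckerMap_apply, Matrix.one_apply,
    Matrix.of_apply, Fin.ext_iff]
  split_ifs <;> first | (exfalso; omega) | norm_num

lemma local_weight (c : ℕ) (τ : Fin m × Fin n → Fin m × Fin n) (hτ : IsMI τ) (x : Fin m × Fin n)
    (hc : (x.1.val + x.2.val) % 2 = c % 2) :
    os (eV m n) x (τ x) * (upW τ x * upW τ (τ x)) * matK m n x (τ x) = gD c x * gD c (τ x) := by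
  have hadj := hτ.2 x
  rw [matK_apply _ _ hadj]
  have hpar : ∀ a b : ℕ, a % 2 = b % 2 → (-1 : ℝ) ^ a = (-1) ^ b := by
    intro a b h
    rw [neg_one_pow_eq_pow_mod_two, h, ← neg_one_pow_eq_pow_mod_two]
  unfold os upW gD
  rw [hτ.1 x]
  simp only [eV_lt]
  unfold gAdj at hadj
  rw [← pow_add]
  rcases hadj with ⟨h1, h2 | h2⟩ | ⟨h1, h2 | h2⟩
  · rw [hpar ((x.1.val + c) / 2 + ((τ x).1.val + c) / 2) 0 (by omega)]
    rw [if_pos (by omega), if_neg (by omega), if_neg (by omega), if_pos (by omega)]; norm_num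
  · rw [hpar ((x.1.val + c) / 2 + ((τ x).1.val + c) / 2) 0 (by omega)]
    rw [if_neg (by omega), if_neg (by omega), if_neg (by omega), if_neg (by omega),
      if_pos (by omega)]; norm_num
  · rw [hpar ((x.1.val + c) / 2 + ((τ x).1.val + c) / 2) x.2.val (by omega)]
    rw [if_pos (by omega), if_pos (by omega), if_neg (by omega), if_neg (by omega),
      if_neg (by omega)]; norm_num
  · rw [hpar ((x.1.val + c) / 2 + ((τ x).1.val + c) / 2) (x.2.val + 1) (by omega)]
    rw [if_neg (by omega), if_neg (by omega), if_pos (by omega), if_neg (by omega),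
      if_neg (by omega), h1, pow_succ]; norm_num

lemma color_weight (c : ℕ) (S : Finset (Fin m × Fin n))
    (hS : ∀ x ∈ S, (x.1.val + x.2.val) % 2 = c % 2) : ∃ k : ℝ, k * k = 1 ∧
    ∀ τ, IsMI τ → Swaps S τ → invS (eV m n) S τ * ∏ x ∈ S, matK m n x (τ x) = k := by
  obtain ⟨k, hk, h⟩ := invS_cross (eV m n) S
  refine ⟨k * ∏ x : Fin m × Fin n, gD c x, ?_, ?_⟩
  · have : (∏ x : Fin m × Fin n, gD c x) * (∏ x, gD c x) = 1 := prod_sq _ _ fun x _ => by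
      unfold gD; rw [← mul_pow]; norm_num
    linear_combination this * (k * k) + hk
  · intro τ hτ hs
    rw [h τ hτ.1 hs, crossX_eq τ hτ, prod_all hτ.1.bijective hs, prod_all hτ.1.bijective hs (gD c),
      mul_assoc, ← Finset.prod_mul_distrib, ← Finset.prod_mul_distrib]
    congr 1
    exact Finset.prod_congr rfl fun x hx => local_weight c τ hτ x (hS x hx)

/-- permutations moving each vertex to a neighbour -/
def IsGood (σ : Equiv.Perm (Fin m × Fin n)) : Prop := ∀ v, gAdj v (σ v)

lemma gAdj_symm {v w : Fin m × Fin n} (h : gAdj v w) : gAdj w v := by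
  unfold gAdj at *; omega

/-- first half of a good permutation -/
def half (S : Finset (Fin m × Fin n)) (σ : Equiv.Perm (Fin m × Fin n)) (v : Fin m × Fin n) :
    Fin m × Fin n := if v ∈ S then σ v else σ.symm v

lemma half_isMI (S : Finset (Fin m × Fin n)) (σ : Equiv.Perm (Fin m × Fin n)) (hσ : IsGood σ)
    (hS : Swaps S σ) : IsMI (half S σ) := by
  constructor
  · intro v
    unfold half
    by_cases hv : v ∈ S
    · rw [if_pos hv, if_neg (by have := hS v; tauto), Equiv.symm_apply_apply]
    · have : σ.symm v ∈ S := by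
        have := hS (σ.symm v)
        rw [Equiv.apply_symm_apply] at this
        tauto
      rw [if_neg hv, if_pos this, Equiv.apply_symm_apply]
  · intro v
    unfold half
    split_ifs
    · exact hσ v
    · have := hσ (σ.symm v)
      rw [Equiv.apply_symm_apply] at this
      exact gAdj_symm this

lemma term_const : ∃ k : ℝ, k * k = 1 ∧ ∀ σ : Equiv.Perm (Fin m × Fin n), IsGood σ →
    ((Equiv.Perm.sign σ : ℤ) : ℝ) * ∏ x, matK m n x (σ x) = k := by
  obtain ⟨k1, hk1, h1⟩ := color_weight (m := m) (n := n) 0 (blk m n) (fun x hx => by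
    rw [mem_blk] at hx; omega)
  obtain ⟨k2, hk2, h2⟩ := color_weight (m := m) (n := n) 1 (blk m n)ᶜ (fun x hx => by
    rw [Finset.mem_compl, mem_blk] at hx; omega)
  have q1 := kS_sq (eV m n) (blk m n)
  have q2 := kS_sq (eV m n) (blk m n)ᶜ
  set K1 := kS (eV m n) (blk m n)
  set K2 := kS (eV m n) (blk m n)ᶜ
  refine ⟨k1 * k2 * (K1 * K2), ?_, ?_⟩
  · calc _ = (k1 * k1) * (k2 * k2) * (K1 * K1) * (K2 * K2) := by ring
      _ = 1 := by rw [hk1, hk2, q1, q2]; norm_num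
  · intro σ hσ
    have hsw := swaps_of_adj σ hσ
    rw [sign_split (eV m n) (blk m n) σ hsw, ← Finset.prod_mul_prod_compl (blk m n)]
    have m1 := half_isMI (blk m n) σ hσ hsw
    have m2 := half_isMI (blk m n)ᶜ σ hσ hsw.compl
    have r1 := h1 _ m1 (swaps_of_adj _ m1.2)
    have r2 := h2 _ m2 (swaps_of_adj _ m2.2).compl
    have e1 : ∀ S : Finset (Fin m × Fin n), invS (eV m n) S (half S σ) = invS (eV m n) S σ := by
      intro S
      unfold invS
      refine Finset.prod_congr rfl fun x hx => Finset.prod_congr rfl fun y hy => ?_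
      rw [half, half, if_pos hx, if_pos hy]
    have e2 : ∀ S : Finset (Fin m × Fin n), ∏ x ∈ S, matK m n x (half S σ x) =
        ∏ x ∈ S, matK m n x (σ x) := by
      intro S
      refine Finset.prod_congr rfl fun x hx => ?_
      rw [half, if_pos hx]
    rw [e1, e2] at r1 r2
    rw [← r1, ← r2]
    ring

lemma matK_zero (x y : Fin m × Fin n) (h : ¬ gAdj x y) : matK m n x y = 0 := by
  unfold gAdj at h
  simp only [matK, matQ, matA, Matrix.add_apply, Matrix.kroneckerMap_apply, Matrix.one_apply,
    Matrix.of_apply, Fin.ext_iff]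
  split_ifs <;> first | (exfalso; omega) | norm_num

open Classical in
lemma abs_det_matK : |(matK m n).det| =
    ((Finset.univ.filter fun σ : Equiv.Perm (Fin m × Fin n) => IsGood σ).card : ℝ) := by
  obtain ⟨k, hk, h⟩ := term_const (m := m) (n := n)
  have hk' : |k| = 1 := by
    have : |k| * |k| = 1 := by rw [← abs_mul, hk, abs_one]
    nlinarith [abs_nonneg k]
  rw [← Matrix.det_transpose, Matrix.det_apply']
  have : ∀ σ : Equiv.Perm (Fin m × Fin n),
      ((Equiv.Perm.sign σ : ℤ) : ℝ) * ∏ i, (matK m n).transpose (σ i) i = if IsGood σ then k else 0 := by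
    intro σ
    split_ifs with hσ
    · exact h σ hσ
    · unfold IsGood at hσ
      push Not at hσ
      obtain ⟨v, hv⟩ := hσ
      rw [Finset.prod_eq_zero (Finset.mem_univ v) (by rw [Matrix.transpose_apply]; exact matK_zero _ _ hv), mul_zero]
  rw [Finset.sum_congr rfl fun σ _ => this σ, ← Finset.sum_filter, Finset.sum_const, nsmul_eq_mul,
    abs_mul, hk', mul_one, Nat.abs_cast]

end Geometry

end CatalanAux
namespace CatalanAux

section Count

variable {m n : ℕ}

lemma grid_adj (v w : Fin m × Fin n) : (gridGraph m n).Adj v w ↔ gAdj v w := by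
  unfold gridGraph gAdj
  rw [SimpleGraph.fromRel_adj, Ne, Prod.ext_iff]
  simp only [Fin.ext_iff]
  omega

/-- the matching of a matching involution -/
def subOf (τ : Fin m × Fin n → Fin m × Fin n) (h : IsMI τ) : (gridGraph m n).Subgraph where
  verts := Set.univ
  Adj v w := τ v = w
  adj_sub := by
    intro v w hvw
    rw [grid_adj, ← hvw]
    exact h.2 v
  edge_vert := fun _ => Set.mem_univ _
  symm := by
    constructor
    intro v w hvw
    change τ w = v
    rw [← hvw]
    exact h.1 v

lemma subOf_pm (τ : Fin m × Fin n → Fin m × Fin n) (h : IsMI τ) :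
    (subOf τ h).IsPerfectMatching := by
  rw [SimpleGraph.Subgraph.isPerfectMatching_iff]
  intro v
  exact ⟨τ v, rfl, fun w hw => Eq.symm hw⟩

lemma exists_of_pm (M : (gridGraph m n).Subgraph) (hM : M.IsPerfectMatching) :
    ∃ (τ : _) (h : IsMI τ), subOf τ h = M := by
  have h1 := SimpleGraph.Subgraph.isPerfectMatching_iff.mp hM
  choose τ hτ hu using h1
  have hI : IsMI τ := by
    refine ⟨fun v => ?_, fun v => ?_⟩
    · exact (hu (τ v) v (hτ v).symm).symm
    · rw [← grid_adj]; exact M.adj_sub (hτ v)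
  refine ⟨τ, hI, ?_⟩
  ext v w
  · simp [subOf, hM.2 v]
  · constructor
    · intro h
      have h : τ v = w := h
      rw [← h]; exact hτ v
    · intro h
      exact (hu v w h).symm

lemma num_eq : numPerfectMatchings (gridGraph m n) =
    Nat.card {τ : Fin m × Fin n → Fin m × Fin n // IsMI τ} := by
  unfold numPerfectMatchings
  rw [← Nat.card_coe_set_eq]
  symm
  refine Nat.card_congr (Equiv.ofBijective
    (fun τ => ⟨subOf τ.1 τ.2, subOf_pm τ.1 τ.2⟩) ⟨?_, ?_⟩)
  · rintro ⟨τ, h⟩ ⟨τ', h'⟩ he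
    have he : subOf τ h = subOf τ' h' := congrArg Subtype.val he
    apply Subtype.ext
    funext v
    have : (subOf τ h).Adj v (τ v) := rfl
    rw [he] at this
    exact Eq.symm this
  · rintro ⟨M, hM⟩
    obtain ⟨τ, h, he⟩ := exists_of_pm M hM
    exact ⟨⟨τ, h⟩, Subtype.ext he⟩

/-- glue two involutions -/
def glue (S : Finset (Fin m × Fin n)) (a b : Fin m × Fin n → Fin m × Fin n) (v : Fin m × Fin n) :
    Fin m × Fin n := if v ∈ S then a v else b v

lemma glue_glue (S : Finset (Fin m × Fin n)) (a b : Fin m × Fin n → Fin m × Fin n)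
    (ha : Function.Involutive a) (hb : Function.Involutive b) (sa : Swaps S a) (sb : Swaps S b)
    (v : Fin m × Fin n) : glue S b a (glue S a b v) = v := by
  unfold glue
  have h1 := sa v
  have h2 := sb v
  by_cases hv : v ∈ S
  · rw [if_pos hv, if_neg (by tauto)]; exact ha v
  · rw [if_neg hv, if_pos (by tauto)]; exact hb v

/-- the gluing permutation -/
def gluePerm (S : Finset (Fin m × Fin n)) (a b : Fin m × Fin n → Fin m × Fin n)
    (ha : Function.Involutive a) (hb : Function.Involutive b) (sa : Swaps S a) (sb : Swaps S b) :
    Equiv.Perm (Fin m × Fin n) where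
  toFun := glue S a b
  invFun := glue S b a
  left_inv := glue_glue S a b ha hb sa sb
  right_inv := glue_glue S b a hb ha sb sa

lemma card_good : Nat.card {σ : Equiv.Perm (Fin m × Fin n) // IsGood σ} =
    numPerfectMatchings (gridGraph m n) ^ 2 := by
  rw [num_eq, pow_two, ← Nat.card_prod]
  refine Nat.card_congr
    { toFun := fun σ => (⟨half (blk m n) σ.1, half_isMI _ _ σ.2 (swaps_of_adj _ σ.2)⟩,
        ⟨half (blk m n)ᶜ σ.1, half_isMI _ _ σ.2 (swaps_of_adj _ σ.2).compl⟩)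
      invFun := fun p => ⟨gluePerm (blk m n) p.1.1 p.2.1 p.1.2.1 p.2.2.1
        (swaps_of_adj _ p.1.2.2) (swaps_of_adj _ p.2.2.2), ?_⟩
      left_inv := ?_
      right_inv := ?_ }
  · intro v
    change gAdj v (glue _ _ _ v)
    unfold glue
    split_ifs
    · exact p.1.2.2 v
    · exact p.2.2.2 v
  · rintro ⟨σ, hσ⟩
    apply Subtype.ext
    ext1 v
    change glue _ _ _ v = σ v
    unfold glue half
    by_cases hv : v ∈ blk m n <;> simp [hv]
  · rintro ⟨⟨a, ha⟩, ⟨b, hb⟩⟩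
    apply Prod.ext <;> apply Subtype.ext <;> funext v
    · change (if v ∈ blk m n then glue (blk m n) a b v else glue (blk m n) b a v) = a v
      unfold glue
      split_ifs <;> rfl
    · change (if v ∈ (blk m n)ᶜ then glue (blk m n) a b v else glue (blk m n) b a v) = b v
      unfold glue
      by_cases hv : v ∈ blk m n <;> simp [hv]

lemma num_sq : |(matK m n).det| = (numPerfectMatchings (gridGraph m n) : ℝ) ^ 2 := by
  classical
  rw [abs_det_matK, ← Nat.cast_pow, ← card_good, Nat.card_eq_fintype_card, Fintype.card_subtype]

end Count

lemma log_num (K : ℕ) :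
    |2 * log (numPerfectMatchings (gridGraph (2 * K) (2 * K))) -
      2 * K * ∑ k : Fin (2 * K), fA (theta (2 * K) k)| ≤ 2 * K * log 2 := by
  have hl : ∀ k : Fin (2 * K), 0 < (matT (2 * cos (theta (2 * K) k)) (2 * K)).det ∧
      |log (matT (2 * cos (theta (2 * K) k)) (2 * K)).det - 2 * K * fA (theta (2 * K) k)| ≤ log 2 := by
    intro k
    have := log_det_matT (arsinh (cos (theta (2 * K) k))) K
    rw [sinh_arsinh] at this
    exact this
  have h1 : 2 * log (numPerfectMatchings (gridGraph (2 * K) (2 * K))) =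
      ∑ k : Fin (2 * K), log (matT (2 * cos (theta (2 * K) k)) (2 * K)).det := by
    have h := num_sq (m := 2 * K) (n := 2 * K)
    have h' := congrArg log h
    rw [log_abs, log_pow, det_matK, log_prod (fun k _ => (hl k).1.ne')] at h'
    rw [h']; norm_num
  rw [h1, Finset.mul_sum, ← Finset.sum_sub_distrib]
  refine (Finset.abs_sum_le_sum_abs _ _).trans ?_
  refine (Finset.sum_le_sum fun k _ => (hl k).2).trans ?_
  simp

lemma sum_theta (n : ℕ) : ∑ k : Fin n, fA (theta n k) =
    ∑ k ∈ Finset.range (n + 1), fA (k * (π / (n + 1))) - fA 0 := by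
  rw [Finset.sum_range_succ', ← Fin.sum_univ_eq_sum_range (fun k => fA ((k + 1 : ℕ) * (π / (n + 1))))]
  simp [theta]

lemma final_bound (K : ℕ) (hK : 1 ≤ K) :
    |log (numPerfectMatchings (gridGraph (2 * K) (2 * K))) / ((2 * K : ℝ)) ^ 2 - catalanConstant / π|
      ≤ (log 2 + π + |fA 0| + 2 * |catalanConstant| / π) / K := by
  have h1 := log_num K
  have h2 := riemann (2 * K)
  rw [sum_theta] at h1
  push_cast at h1 h2
  have hK' : (1 : ℝ) ≤ K := by exact_mod_cast hK
  set x : ℝ := (K : ℝ)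
  set L := log (numPerfectMatchings (gridGraph (2 * K) (2 * K)))
  set S := ∑ k ∈ Finset.range (2 * K + 1), fA (k * (π / (2 * x + 1)))
  set G := catalanConstant
  have hpi := Real.pi_pos
  have hG : -|G| ≤ G ∧ G ≤ |G| := ⟨neg_abs_le G, le_abs_self G⟩
  have hf : -|fA 0| ≤ fA 0 ∧ fA 0 ≤ |fA 0| := ⟨neg_abs_le _, le_abs_self _⟩
  -- S vs G
  have h3 : |S - 2 * G * (2 * x + 1) / π| ≤ π := by
    have e : S - 2 * G * (2 * x + 1) / π = (π / (2 * x + 1) * S - 2 * G) * ((2 * x + 1) / π) := by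
      field_simp
    rw [e, abs_mul, abs_of_pos (show 0 < (2 * x + 1) / π by positivity)]
    refine (mul_le_mul_of_nonneg_right h2 (by positivity)).trans (le_of_eq ?_)
    field_simp
  have e : L / (2 * x) ^ 2 - G / π = (2 * L - 2 * x * (S - fA 0)) / (8 * x ^ 2) +
      (S - 2 * G * (2 * x + 1) / π) / (4 * x) - fA 0 / (4 * x) + 2 * G / π / (4 * x) := by
    field_simp
    ring
  have b1 : |(2 * L - 2 * x * (S - fA 0)) / (8 * x ^ 2)| ≤ log 2 / x := by
    rw [abs_div, abs_of_pos (show 0 < 8 * x ^ 2 by positivity), div_le_div_iff₀ (by positivity) (by positivity)]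
    have hl := Real.log_pos (show (1 : ℝ) < 2 by norm_num)
    calc _ ≤ 2 * x * log 2 * x := mul_le_mul_of_nonneg_right h1 (by positivity)
      _ ≤ _ := by nlinarith [mul_pos hl (show 0 < x ^ 2 by positivity)]
  have gen : ∀ y b : ℝ, |y| ≤ b → |y / (4 * x)| ≤ b / x := by
    intro y b hy
    rw [abs_div, abs_of_pos (show 0 < 4 * x by positivity), div_le_div_iff₀ (by positivity) (by positivity)]
    nlinarith [abs_nonneg y, mul_le_mul_of_nonneg_right hy (show 0 ≤ x by positivity),
      mul_nonneg (abs_nonneg y) (show 0 ≤ x by positivity)]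
  have b2 := gen _ _ h3
  have b3 := gen (fA 0) _ le_rfl
  have b4 := gen (2 * G / π) (2 * |G| / π) (by rw [abs_div, abs_mul, abs_of_pos hpi]; norm_num)
  rw [e, add_div, add_div, add_div]
  rw [abs_le] at *
  constructor <;> linarith [b1.1, b1.2, b2.1, b2.2, b3.1, b3.2, b4.1, b4.2]

end CatalanAux
/-- As n → ∞ along even integers (n = 2k), (1/n²) log N(n,n) converges to
G/π, where G is Catalan's constant. -/
theorem entropy_limit_catalan :
    Tendsto (fun k : ℕ =>
        Real.log (numPerfectMatchings (gridGraph (2 * k) (2 * k))) / ((2 * k : ℝ)) ^ 2)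
      atTop (nhds (catalanConstant / π)) := by
  rw [tendsto_iff_norm_sub_tendsto_zero]
  refine squeeze_zero' (Eventually.of_forall fun _ => norm_nonneg _)
    ((eventually_ge_atTop 1).mono fun K hK => ?_)
    (tendsto_const_div_atTop_nhds_zero_nat
      (log 2 + π + |CatalanAux.fA 0| + 2 * |catalanConstant| / π))
  exact CatalanAux.final_bound K hK
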